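/- For every prime power q there exist constants C₁, C₂ > 0, depending only on q, such that for every integer g ≥ 0 there is an N with the following property: for all n ≥ N and every regular elliptic element c ∈ GL_n(𝔽_q), the number of pairs (u,v) ∈ GL_n(𝔽_q)² with u·v = c and dim ker(u−1) + dim ker(v−1) = n − g (i.e., the number of genus-g factorizations of c into two factors) lies between C₁ · q^{(n+g)²/2}/|GL_g(𝔽_q)| and C₂ · q^{(n+g)²/2}/|GL_g(𝔽_q)|, where |GL_0(𝔽_q)| = 1. -/

import Mathlib

/-- The dimension of the fixed space `ker(u - 1)` of `u ∈ GL_n(F)`. -/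
noncomputable def fixedDim {F : Type} [Field F] {n : ℕ} (u : GL (Fin n) F) : ℕ :=
  Module.finrank F (LinearMap.ker (Matrix.toLin' ((u : Matrix (Fin n) (Fin n) F) - 1)))

namespace GenusFact

open Module

set_option linter.unusedSectionVars false

lemma seq_count {α : Type*} [Finite α] (S : ∀ k : ℕ, Set (Fin k → α)) (m : ℕ → ℝ) (K : ℕ)
    (hm : ∀ k < K, 0 ≤ m k) (h0 : (Fin.elim0 : Fin 0 → α) ∈ S 0)
    (hstep : ∀ k < K, ∀ s ∈ S k,
      m k ≤ (Nat.card {v : α // (Fin.snoc s v : Fin (k + 1) → α) ∈ S (k + 1)} : ℝ)) :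
    ∀ k ≤ K, ∏ i ∈ Finset.range k, m i ≤ (Nat.card (S k) : ℝ) := by
  intro k
  induction k with
  | zero =>
    intro _
    have : 0 < Nat.card (S 0) := by
      have : Nonempty (S 0) := ⟨⟨_, h0⟩⟩
      exact Nat.card_pos
    simpa using (by exact_mod_cast this : (1 : ℝ) ≤ (Nat.card (S 0) : ℝ))
  | succ k ih =>
    intro hk
    have ih' := ih (by omega)
    have : Fintype (S k) := Fintype.ofFinite _
    have hinj : Nat.card (Σ s : S k, {v : α // (Fin.snoc s.1 v : Fin (k + 1) → α) ∈ S (k + 1)})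
        ≤ Nat.card (S (k + 1)) := by
      refine Nat.card_le_card_of_injective
        (fun t => (⟨Fin.snoc t.1.1 t.2.1, t.2.2⟩ : S (k + 1))) ?_
      rintro ⟨⟨s, hs⟩, ⟨v, hv⟩⟩ ⟨⟨s', hs'⟩, ⟨v', hv'⟩⟩ h
      simp only [Subtype.mk.injEq] at h
      obtain ⟨h1, h2⟩ := Fin.snoc_injective2 h
      subst h1; subst h2; rfl
    rw [Nat.card_sigma] at hinj
    rw [Finset.prod_range_succ]
    calc (∏ i ∈ Finset.range k, m i) * m k ≤ (Nat.card (S k) : ℝ) * m k :=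
          mul_le_mul_of_nonneg_right ih' (hm k (by omega))
      _ = ∑ s : S k, m k := by simp [Nat.card_eq_fintype_card]
      _ ≤ ∑ s : S k, (Nat.card {v : α // (Fin.snoc s.1 v : Fin (k + 1) → α) ∈ S (k + 1)} : ℝ) :=
          Finset.sum_le_sum fun s _ => hstep k (by omega) s.1 s.2
      _ ≤ _ := by exact_mod_cast hinj

lemma prod_half (k : ℕ) :
    (1 / 4 : ℝ) + (1 / 2) ^ (k + 2) ≤ ∏ i ∈ Finset.range (k + 1), (1 - (1 / 2 : ℝ) ^ (i + 1)) := by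
  induction k with
  | zero => norm_num
  | succ k ih =>
    rw [Finset.prod_range_succ]
    have ht : (1 / 2 : ℝ) ^ k ≤ 1 := pow_le_one₀ (by norm_num) (by norm_num)
    have ht0 : 0 < (1 / 2 : ℝ) ^ k := by positivity
    have : (0 : ℝ) ≤ 1 - (1 / 2 : ℝ) ^ (k + 1 + 1) := by
      rw [pow_succ, pow_succ]; nlinarith
    refine le_trans ?_ (mul_le_mul_of_nonneg_right ih this)
    simp only [pow_succ]
    nlinarith

lemma prod_bound (k : ℕ) (r : ℕ → ℝ) (h : ∀ i < k, r i ≤ (1 / 2) ^ (k - i)) :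
    (1 / 4 : ℝ) ≤ ∏ i ∈ Finset.range k, (1 - r i) := by
  have h1 : (1 / 4 : ℝ) ≤ ∏ i ∈ Finset.range k, (1 - (1 / 2 : ℝ) ^ (i + 1)) := by
    cases k with
    | zero => norm_num
    | succ k => exact le_trans (by have : (0:ℝ) < (1 / 2) ^ (k + 2) := by positivity
                                   linarith) (prod_half k)
  rw [← Finset.prod_range_reflect] at h1
  refine h1.trans (Finset.prod_le_prod ?_ ?_)
  · intro i _
    have : (1 / 2 : ℝ) ^ (k - 1 - i + 1) ≤ 1 := pow_le_one₀ (by norm_num) (by norm_num)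
    linarith
  · intro i hi
    have hi' := Finset.mem_range.1 hi
    have := h i hi'
    rw [show k - 1 - i + 1 = k - i by omega]
    linarith

section vs

variable {F : Type} [Field F] [Fintype F] {V : Type} [AddCommGroup V] [Module F V] [Finite V]

/-- the subspace of vectors dependent on `s` modulo `P`. -/
def dep (P : Submodule F V) {k : ℕ} (s : Fin k → V) : Submodule F V :=
  (Submodule.span F (Set.range (P.mkQ ∘ s))).comap P.mkQ

lemma card_dep (P : Submodule F V) {k : ℕ} (s : Fin k → V) :
    Nat.card (dep P s) ≤ Fintype.card F ^ (finrank F P + k) := by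
  rw [Module.natCard_eq_pow_finrank (K := F), Nat.card_eq_fintype_card]
  apply Nat.pow_le_pow_right Fintype.card_pos
  unfold dep
  rw [Set.range_comp, ← Submodule.map_span, Submodule.comap_map_mkQ]
  refine (Submodule.finrank_add_le_finrank_add_finrank _ _).trans ?_
  have := finrank_range_le_card (R := F) s
  simp only [Fintype.card_fin] at this
  exact Nat.add_le_add_left this _

lemma snoc_indep (P : Submodule F V) {k : ℕ} (s : Fin k → V) (v : V)
    (h : LinearIndependent F (P.mkQ ∘ s)) (hv : v ∉ dep P s) :
    LinearIndependent F (P.mkQ ∘ (Fin.snoc s v : Fin (k + 1) → V)) := by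
  rw [Fin.comp_snoc, linearIndependent_finSnoc]
  exact ⟨h, hv⟩

lemma card_q (V : Type) [AddCommGroup V] [Module F V] [Finite V] :
    (Nat.card V : ℝ) = (Fintype.card F : ℝ) ^ finrank F V := by
  rw [Module.natCard_eq_pow_finrank (K := F), Nat.card_eq_fintype_card]; push_cast; rfl

lemma card_compl_two (U W : Submodule F V) :
    (Nat.card V : ℝ) * ((1 - Nat.card U / Nat.card V) * (1 - Nat.card W / Nat.card V)) ≤
      (Nat.card {v : V // v ∉ U ∧ v ∉ W} : ℝ) := by
  have hV : (0 : ℝ) < Nat.card V := by exact_mod_cast Nat.card_pos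
  have h1 : ((U ⊔ W : Submodule F V) : Set V).ncard * ((U ⊓ W : Submodule F V) : Set V).ncard
      = (U : Set V).ncard * (W : Set V).ncard := by
    simp only [← Nat.card_coe_set_eq, SetLike.coe_sort_coe]
    rw [Module.natCard_eq_pow_finrank (K := F) (V := (U ⊔ W : Submodule F V)),
      Module.natCard_eq_pow_finrank (K := F) (V := (U ⊓ W : Submodule F V)),
      Module.natCard_eq_pow_finrank (K := F) (V := U), Module.natCard_eq_pow_finrank (K := F) (V := W),
      ← pow_add, ← pow_add, Submodule.finrank_sup_add_finrank_inf_eq]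
  have h2 : ((U ⊔ W : Submodule F V) : Set V).ncard ≤ Nat.card V := Set.ncard_le_card _
  have h3 := Set.ncard_union_add_ncard_inter (U : Set V) (W : Set V)
  have h4 := Set.ncard_add_ncard_compl ((U : Set V) ∪ W)
  have h5 : Nat.card {v : V // v ∉ U ∧ v ∉ W} = (((U : Set V) ∪ W)ᶜ).ncard := by
    rw [← Nat.card_coe_set_eq]
    exact Nat.card_congr (Equiv.subtypeEquivRight (by intro v; simp))
  have h6 : ((U ⊓ W : Submodule F V) : Set V) = (U : Set V) ∩ W := rfl
  rw [h6] at h1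
  have hU : Nat.card U = (U : Set V).ncard := by rw [← Nat.card_coe_set_eq]; rfl
  have hW : Nat.card W = (W : Set V).ncard := by rw [← Nat.card_coe_set_eq]; rfl
  rw [h5, hU, hW]
  have h7 : (U : Set V).ncard * (W : Set V).ncard ≤ Nat.card V * ((U : Set V) ∩ W).ncard := by
    rw [← h1]; exact Nat.mul_le_mul_right _ h2
  have e7 : ((U : Set V).ncard : ℝ) * (W : Set V).ncard ≤ Nat.card V * ((U : Set V) ∩ W).ncard := by
    exact_mod_cast h7
  have e3 : (((U : Set V) ∪ W).ncard : ℝ) + ((U : Set V) ∩ W).ncard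
    = (U : Set V).ncard + (W : Set V).ncard := by exact_mod_cast h3
  have e4 : (((U : Set V) ∪ W).ncard : ℝ) + (((U : Set V) ∪ W)ᶜ).ncard = Nat.card V := by
    exact_mod_cast h4
  have : (Nat.card V : ℝ) * ((1 - (U : Set V).ncard / Nat.card V) * (1 - (W : Set V).ncard / Nat.card V))
     = Nat.card V - (U : Set V).ncard - (W : Set V).ncard
      + ((U : Set V).ncard * (W : Set V).ncard) / Nat.card V := by
    field_simp; ring
  rw [this]
  have : ((U : Set V).ncard * (W : Set V).ncard : ℝ) / Nat.card V ≤ ((U : Set V) ∩ W).ncard := by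
    rw [div_le_iff₀ hV]; linarith
  linarith

/-- sequences independent modulo two subspaces -/
lemma count_x (P Q : Submodule F V) (a b : ℕ) (hP : finrank F P ≤ b) (hQ : finrank F Q ≤ b)
    (hab : a + b ≤ finrank F V) :
    (Fintype.card F : ℝ) ^ (finrank F V * a) * (1 / 4) ^ 2 ≤
      (Nat.card {x : Fin a → V // LinearIndependent F (P.mkQ ∘ x) ∧
        LinearIndependent F (Q.mkQ ∘ x)} : ℝ) := by
  set q : ℝ := (Fintype.card F : ℝ) with hq
  have hq2 : (2 : ℝ) ≤ q := by
    have := Fintype.one_lt_card (α := F)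
    rw [hq]; exact_mod_cast this
  have hq0 : 0 < q := by linarith
  set n := finrank F V with hn
  set r : ℕ → ℝ := fun i => q ^ (b + i) / q ^ n with hr
  have hr1 : ∀ i < a, r i ≤ (1 / 2) ^ (a - i) := by
    intro i hi
    rw [hr]
    simp only
    rw [div_le_iff₀ (by positivity)]
    have : q ^ n = q ^ (b + i) * q ^ (a - i) * q ^ (n - a - b) := by
      rw [← pow_add, ← pow_add]; congr 1; omega
    rw [this]
    have e1 : (1 : ℝ) ≤ (1 / 2) ^ (a - i) * q ^ (a - i) := by
      rw [← mul_pow]; exact one_le_pow₀ (by linarith)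
    have e2 : (1 : ℝ) ≤ q ^ (n - a - b) := one_le_pow₀ (by linarith)
    have e3 : 0 < q ^ (b + i) := by positivity
    nlinarith [mul_le_mul e1 e2 (by norm_num) (by positivity)]
  have hr2 : ∀ i < a, r i ≤ 1 := fun i hi => (hr1 i hi).trans (pow_le_one₀ (by norm_num) (by norm_num))
  have key := seq_count (α := V) (fun k => {x : Fin k → V | LinearIndependent F (P.mkQ ∘ x) ∧
        LinearIndependent F (Q.mkQ ∘ x)}) (fun i => q ^ n * (1 - r i) ^ 2) a
      (fun k _ => by positivity)
      ⟨linearIndependent_empty_type, linearIndependent_empty_type⟩ ?_ a le_rfl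
  · refine le_trans ?_ key
    rw [Finset.prod_mul_distrib, Finset.prod_const, Finset.card_range, ← pow_mul, Finset.prod_pow]
    have := prod_bound a r hr1
    gcongr
  · rintro k hk s ⟨h1, h2⟩
    have hc := card_compl_two (dep P s) (dep Q s)
    have hmono : (Nat.card {v : V // v ∉ dep P s ∧ v ∉ dep Q s} : ℝ) ≤
        Nat.card {v : V // (Fin.snoc s v : Fin (k + 1) → V) ∈ {x : Fin (k + 1) → V |
          LinearIndependent F (P.mkQ ∘ x) ∧ LinearIndependent F (Q.mkQ ∘ x)}} := by
      norm_cast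
      refine Nat.card_le_card_of_injective (Subtype.map id ?_) (Subtype.map_injective _ Function.injective_id)
      rintro v ⟨hv1, hv2⟩
      exact ⟨snoc_indep P s v h1 hv1, snoc_indep Q s v h2 hv2⟩
    refine le_trans ?_ (hc.trans hmono)
    rw [card_q (F := F) V, sq]
    have b1 : ∀ R : Submodule F V, finrank F R ≤ b → (Nat.card (dep R s) : ℝ) / q ^ n ≤ r k := by
      intro R hR
      rw [hr]
      simp only
      gcongr
      refine (Nat.cast_le.2 (card_dep R s)).trans ?_
      push_cast
      exact pow_le_pow_right₀ (by linarith) (by omega)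
    have c1 := b1 P hP
    have c2 := b1 Q hQ
    have c3 := hr2 k hk
    have c4 : 0 ≤ 1 - r k := by linarith
    apply mul_le_mul_of_nonneg_left _ (by positivity)
    apply mul_le_mul <;> linarith

lemma card_compl_three (A B C : Set V) :
    (Nat.card V : ℝ) - A.ncard - B.ncard - C.ncard ≤
      (Nat.card {v : V // v ∉ A ∧ v ∉ B ∧ v ∉ C} : ℝ) := by
  have h5 : Nat.card {v : V // v ∉ A ∧ v ∉ B ∧ v ∉ C} = ((A ∪ (B ∪ C))ᶜ).ncard := by
    rw [← Nat.card_coe_set_eq]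
    exact Nat.card_congr (Equiv.subtypeEquivRight (by intro v; simp))
  have h4 := Set.ncard_add_ncard_compl (A ∪ (B ∪ C))
  have h1 := Set.ncard_union_le A (B ∪ C)
  have h2 := Set.ncard_union_le B C
  rw [h5]
  have : Nat.card V ≤ ((A ∪ (B ∪ C))ᶜ).ncard + A.ncard + B.ncard + C.ncard := by omega
  have : (Nat.card V : ℝ) ≤ ((A ∪ (B ∪ C))ᶜ).ncard + A.ncard + B.ncard + C.ncard := by
    exact_mod_cast this
  linarith

lemma card_shift (U : Submodule F V) (e : V) : {v : V | v - e ∈ U}.ncard = Nat.card U := by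
  rw [← Nat.card_coe_set_eq]
  exact Nat.card_congr ((Equiv.subRight e).subtypeEquiv (by intro v; simp))

lemma count_f (P Q R : Submodule F V) (e e' : ℕ → V) (a b g : ℕ)
    (hP : finrank F P ≤ a + b) (hQ : finrank F Q ≤ b) (hR : finrank F R ≤ a)
    (hn : a + b + g = finrank F V) (ha : 2 ≤ a) (hb : 2 ≤ b) :
    (Fintype.card F : ℝ) ^ (finrank F V * g) * (1 / 4) ^ 2 ≤
      (Nat.card {f : Fin g → V // LinearIndependent F (P.mkQ ∘ f) ∧
        LinearIndependent F (Q.mkQ ∘ (fun i => f i - e i)) ∧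
        LinearIndependent F (R.mkQ ∘ (fun i => f i - e' i))} : ℝ) := by
  set q : ℝ := (Fintype.card F : ℝ) with hq
  have hq2 : (2 : ℝ) ≤ q := by
    have := Fintype.one_lt_card (α := F)
    rw [hq]; exact_mod_cast this
  have hq0 : 0 < q := by linarith
  set n := finrank F V with hn'
  set r : ℕ → ℝ := fun i => 1 / q ^ (g - i) with hr
  have hr1 : ∀ i < g, r i ≤ (1 / 2) ^ (g - i) := by
    intro i hi
    rw [hr]
    simp only
    rw [one_div, ← inv_pow]
    apply pow_le_pow_left₀ (by positivity)
    rw [one_div]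
    exact inv_anti₀ (by norm_num) hq2
  have key := seq_count (α := V) (fun k => {f : Fin k → V | LinearIndependent F (P.mkQ ∘ f) ∧
        LinearIndependent F (Q.mkQ ∘ (fun i : Fin k => f i - e i)) ∧
        LinearIndependent F (R.mkQ ∘ (fun i : Fin k => f i - e' i))}) (fun i => q ^ n * (1 - r i) ^ 2) g
      (fun k _ => by positivity)
      ⟨linearIndependent_empty_type, linearIndependent_empty_type, linearIndependent_empty_type⟩ ?_
        g le_rfl
  · refine le_trans ?_ key
    rw [Finset.prod_mul_distrib, Finset.prod_const, Finset.card_range, ← pow_mul, Finset.prod_pow]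
    have := prod_bound g r hr1
    gcongr
  · rintro k hk s ⟨h1, h2, h3⟩
    have hsn : ∀ (d : ℕ → V) (v : V), (fun i : Fin (k + 1) => (Fin.snoc s v : Fin (k + 1) → V) i - d i)
        = Fin.snoc (fun i : Fin k => s i - d i) (v - d k) := by
      intro d v
      funext i
      refine Fin.lastCases ?_ (fun j => ?_) i
      · simp
      · simp
    set s1 : Fin k → V := fun i => s i - e i
    set s2 : Fin k → V := fun i => s i - e' i
    have hc := card_compl_three (dep P s : Set V) {v | v - e k ∈ dep Q s1} {v | v - e' k ∈ dep R s2}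
    have hmono : (Nat.card {v : V // v ∉ (dep P s : Set V) ∧ v ∉ {v | v - e k ∈ dep Q s1} ∧
        v ∉ {v | v - e' k ∈ dep R s2}} : ℝ) ≤
        Nat.card {v : V // (Fin.snoc s v : Fin (k + 1) → V) ∈ {f : Fin (k + 1) → V |
          LinearIndependent F (P.mkQ ∘ f) ∧
        LinearIndependent F (Q.mkQ ∘ (fun i : Fin (k + 1) => f i - e i)) ∧
        LinearIndependent F (R.mkQ ∘ (fun i : Fin (k + 1) => f i - e' i))}} := by
      norm_cast
      refine Nat.card_le_card_of_injective (Subtype.map id ?_) (Subtype.map_injective _ Function.injective_id)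
      rintro v ⟨hv1, hv2, hv3⟩
      refine ⟨snoc_indep P s v h1 hv1, ?_, ?_⟩
      · simp only [id]
        rw [hsn]
        exact snoc_indep Q s1 _ h2 hv2
      · simp only [id]
        rw [hsn]
        exact snoc_indep R s2 _ h3 hv3
    refine le_trans ?_ (hc.trans hmono)
    rw [card_shift, card_shift, card_q (F := F) V, ← Nat.card_coe_set_eq]
    have b1 : ∀ (R : Submodule F V) (t : Fin k → V) (m : ℕ), finrank F R ≤ m →
        (Nat.card (dep R t) : ℝ) ≤ q ^ (m + k) := by
      intro R t m hR
      refine (Nat.cast_le.2 (card_dep R t)).trans ?_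
      push_cast
      exact pow_le_pow_right₀ (by linarith) (by omega)
    have c1 := b1 P s _ hP
    have c2 := b1 Q s1 _ hQ
    have c3 := b1 R s2 _ hR
    have hrk : r k ≤ 1 / 2 := (hr1 k hk).trans (by
      calc (1 / 2 : ℝ) ^ (g - k) ≤ (1 / 2) ^ 1 :=
            pow_le_pow_of_le_one (by norm_num) (by norm_num) (by omega)
        _ = 1 / 2 := by norm_num)
    have hr0 : 0 ≤ r k := by rw [hr]; positivity
    have d1 : q ^ (a + b + k) = q ^ n * r k := by
      rw [hr]; simp only
      rw [show n = (a + b + k) + (g - k) by omega, pow_add _ (a + b + k)]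
      field_simp
    have four : ∀ m, 2 ≤ m → (4 : ℝ) ≤ q ^ m := by
      intro m hm
      calc (4 : ℝ) = 2 ^ 2 := by norm_num
        _ ≤ q ^ 2 := by gcongr
        _ ≤ q ^ m := pow_le_pow_right₀ (by linarith) hm
    have d2 : 4 * q ^ (b + k) ≤ q ^ n * r k := by
      rw [← d1, show a + b + k = a + (b + k) by omega, pow_add _ a]
      gcongr
      exact four a ha
    have d3 : 4 * q ^ (a + k) ≤ q ^ n * r k := by
      rw [← d1, show a + b + k = b + (a + k) by omega, pow_add _ b]
      gcongr
      exact four b hb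
    have hqn : 0 < q ^ n := by positivity
    have d4 : q ^ n * (r k * r k) ≤ q ^ n * (r k * (1 / 2)) := by gcongr
    simp only [SetLike.coe_sort_coe]
    nlinarith


/-- `∏ (q^m - q^i)`, the number of ordered `k`-tuples of independent vectors. -/
def gam (q m k : ℕ) : ℕ := ∏ i : Fin k, (q ^ m - q ^ (i : ℕ))

lemma gam_le (q m k : ℕ) : (gam q m k : ℝ) ≤ (q : ℝ) ^ (m * k) := by
  have : gam q m k ≤ q ^ (m * k) := by
    unfold gam
    refine (Finset.prod_le_prod' (fun i _ => Nat.sub_le _ _)).trans ?_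
    simp [pow_mul]
  exact_mod_cast this

lemma le_gam (q m k : ℕ) (hq : 2 ≤ q) (hk : k ≤ m) :
    (q : ℝ) ^ (m * k) * (1 / 4) ≤ (gam q m k : ℝ) := by
  have hq2 : (2 : ℝ) ≤ q := by exact_mod_cast hq
  have hq0 : (0 : ℝ) < q := by linarith
  have : (gam q m k : ℝ) = (q : ℝ) ^ (m * k) *
      ∏ i ∈ Finset.range k, (1 - (q : ℝ) ^ i / (q : ℝ) ^ m) := by
    unfold gam
    rw [pow_mul, Finset.prod_range, Nat.cast_prod]
    rw [show ((q : ℝ) ^ m) ^ k = ∏ _i : Fin k, (q : ℝ) ^ m by simp, ← Finset.prod_mul_distrib]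
    refine Finset.prod_congr rfl fun i _ => ?_
    rw [Nat.cast_sub (Nat.pow_le_pow_right (by omega) (by omega))]
    push_cast
    field_simp
  rw [this]
  apply mul_le_mul_of_nonneg_left _ (by positivity)
  apply prod_bound
  intro i hi
  have h1 : (q : ℝ) ^ m = q ^ i * q ^ (k - i) * q ^ (m - k) := by
    rw [← pow_add, ← pow_add]; congr 1; omega
  rw [div_le_iff₀ (by positivity), h1]
  have e1 : (1 : ℝ) ≤ (1 / 2) ^ (k - i) * q ^ (k - i) := by
    rw [← mul_pow]; exact one_le_pow₀ (by linarith)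
  have e2 : (1 : ℝ) ≤ (q : ℝ) ^ (m - k) := one_le_pow₀ (by linarith)
  have e3 : 0 < (q : ℝ) ^ i := by positivity
  nlinarith [mul_le_mul e1 e2 (by norm_num) (by positivity)]

lemma card_li (W : Type) [AddCommGroup W] [Module F W] [Finite W] (k : ℕ) (hk : k ≤ finrank F W) :
    Nat.card {s : Fin k → W // LinearIndependent F s} = gam (Fintype.card F) (finrank F W) k :=
  card_linearIndependent hk

lemma exists_compl {ι : Type} [Fintype ι] (z : ι → V) (hz : LinearIndependent F z) (g : ℕ)
    (hg : Fintype.card ι + g = finrank F V) :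
    ∃ e : Fin g → V, LinearIndependent F (Sum.elim z e) := by
  set P := Submodule.span F (Set.range z) with hP
  have hfr : finrank F P = Fintype.card ι := finrank_span_eq_card hz
  have hq : finrank F (V ⧸ P) = g := by
    have := Submodule.finrank_quotient_add_finrank P
    omega
  let b := finBasisOfFinrankEq F (V ⧸ P) hq
  refine ⟨fun i => Function.surjInv P.mkQ_surjective (b i), ?_⟩
  have h1 : LinearIndependent F (fun i => (⟨z i, Submodule.subset_span ⟨i, rfl⟩⟩ : P)) :=
    linearIndependent_span hz
  refine LinearIndependent.sumElim_of_quotient h1 _ ?_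
  have : (Submodule.Quotient.mk ∘ fun i => Function.surjInv P.mkQ_surjective (b i)) = (b : Fin g → V ⧸ P) := by
    funext i
    exact Function.surjInv_eq P.mkQ_surjective (b i)
  rw [this]
  exact b.linearIndependent

lemma li_sum {ι κ : Type} (z : ι → V) (hz : LinearIndependent F z) (f : κ → V)
    (hf : LinearIndependent F ((Submodule.span F (Set.range z)).mkQ ∘ f)) :
    LinearIndependent F (Sum.elim z f) := by
  have h1 : LinearIndependent F
      (fun i => (⟨z i, Submodule.subset_span ⟨i, rfl⟩⟩ : Submodule.span F (Set.range z))) :=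
    linearIndependent_span hz
  exact LinearIndependent.sumElim_of_quotient h1 _ hf

/-- the relevant linear maps -/
def IsX (C : V →ₗ[F] V) (a b : ℕ) (u : V →ₗ[F] V) : Prop :=
  Function.Injective u ∧ finrank F (LinearMap.ker (u - 1)) = a ∧
    finrank F (LinearMap.ker (u - C)) = b

/-- maps with bases of both kernels -/
abbrev TT (C : V →ₗ[F] V) (a b : ℕ) : Type :=
  Σ u : {u : V →ₗ[F] V // IsX C a b u},
    {x : Fin a → LinearMap.ker (u.1 - 1) // LinearIndependent F x} ×
    {y : Fin b → LinearMap.ker (u.1 - C) // LinearIndependent F y}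

instance : Finite (V →ₗ[F] V) := Finite.of_injective _ DFunLike.coe_injective

lemma card_TT (C : V →ₗ[F] V) (a b : ℕ) :
    Nat.card (TT C a b) = Nat.card {u : V →ₗ[F] V // IsX C a b u} *
      (gam (Fintype.card F) a a * gam (Fintype.card F) b b) := by
  have : Fintype {u : V →ₗ[F] V // IsX C a b u} := Fintype.ofFinite _
  rw [Nat.card_sigma, Nat.card_eq_fintype_card, ← smul_eq_mul, ← Finset.card_univ, ← Finset.sum_const]
  refine Finset.sum_congr rfl fun u _ => ?_
  obtain ⟨h1, h2, h3⟩ := u.2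
  rw [Nat.card_prod, card_li _ _ h2.ge, card_li _ _ h3.ge, h2, h3]

lemma upper (C : V →ₗ[F] V) (hC1 : ∀ v, C v = v → v = 0) (a b g : ℕ)
    (hn : a + b + g = finrank F V) :
    Nat.card {u : V →ₗ[F] V // IsX C a b u} *
      (gam (Fintype.card F) a a * gam (Fintype.card F) b b) ≤
      Fintype.card F ^ (finrank F V * finrank F V) := by
  classical
  rw [← card_TT]
  have hE : ∀ p : (Fin a → V) × (Fin b → V), ∃ e : Fin g → V,
      LinearIndependent F (Sum.elim p.1 p.2) →
        LinearIndependent F (Sum.elim (Sum.elim p.1 p.2) e) := by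
    intro p
    by_cases h : LinearIndependent F (Sum.elim p.1 p.2)
    · obtain ⟨e, he⟩ := exists_compl _ h g (by simpa using hn)
      exact ⟨e, fun _ => he⟩
    · exact ⟨0, fun h' => absurd h' h⟩
  choose E hE using hE
  have hinj : Nat.card (TT C a b) ≤ Nat.card (((Fin a → V) × (Fin b → V)) × (Fin g → V)) := by
    refine Nat.card_le_card_of_injective
      (fun t => ((fun i => (t.2.1.1 i : V), fun i => (t.2.2.1 i : V)),
        fun i => t.1.1 (E (fun i => (t.2.1.1 i : V), fun i => (t.2.2.1 i : V)) i))) ?_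
    rintro ⟨⟨u, hu⟩, ⟨x, hx⟩, ⟨y, hy⟩⟩ ⟨⟨u', hu'⟩, ⟨x', hx'⟩, ⟨y', hy'⟩⟩ h
    simp only [Prod.mk.injEq] at h
    obtain ⟨⟨h1, h2⟩, h3⟩ := h
    have ux : ∀ i, u (x i) = x i := fun i => by
      have := (x i).2
      rw [LinearMap.mem_ker, LinearMap.sub_apply, sub_eq_zero] at this
      exact this
    have uy : ∀ i, u (y i) = C (y i) := fun i => by
      have := (y i).2
      rw [LinearMap.mem_ker, LinearMap.sub_apply, sub_eq_zero] at this
      exact this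
    have ux' : ∀ i, u' (x i) = x i := fun i => by
      have := (x' i).2
      rw [LinearMap.mem_ker, LinearMap.sub_apply, sub_eq_zero] at this
      have e := congrFun h1 i
      rw [e]
      exact this
    have uy' : ∀ i, u' (y i) = C (y i) := fun i => by
      have := (y' i).2
      rw [LinearMap.mem_ker, LinearMap.sub_apply, sub_eq_zero] at this
      have e := congrFun h2 i
      rw [e]
      exact this
    rw [← h1, ← h2] at h3
    have hxV : LinearIndependent F (fun i => (x i : V)) :=
      hx.map' (Submodule.subtype _) (Submodule.ker_subtype _)
    have hyV : LinearIndependent F (fun i => (y i : V)) :=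
      hy.map' (Submodule.subtype _) (Submodule.ker_subtype _)
    have hdis : LinearIndependent F (Sum.elim (fun i => (x i : V)) (fun i => (y i : V))) := by
      refine hxV.sum_type hyV ?_
      refine Disjoint.mono (a := _) (b := LinearMap.ker (u - 1)) (c := _)
        (d := LinearMap.ker (u - C)) ?_ ?_ ?_
      · rw [Submodule.span_le]; rintro _ ⟨i, rfl⟩; exact (x i).2
      · rw [Submodule.span_le]; rintro _ ⟨i, rfl⟩; exact (y i).2
      · rw [Submodule.disjoint_def]
        intro v hv hv'
        rw [LinearMap.mem_ker, LinearMap.sub_apply, sub_eq_zero] at hv hv'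
        apply hC1
        rw [← hv', hv]; rfl
    have hB := hE (fun i => (x i : V), fun i => (y i : V)) hdis
    have hspan := hB.span_eq_top_of_card_eq_finrank' (by simpa using hn)
    have huu : u = u' := by
      refine LinearMap.ext_on_range hspan ?_
      rintro ((i | i) | i)
      · simp [ux, ux']
      · simp [uy, uy']
      · exact congrFun h3 i
    subst huu
    have hxx : x = x' := funext fun i => Subtype.ext (congrFun h1 i)
    have hyy : y = y' := funext fun i => Subtype.ext (congrFun h2 i)
    subst hxx; subst hyy; rfl
  refine hinj.trans (le_of_eq ?_)
  rw [Nat.card_prod, Nat.card_prod, Nat.card_fun, Nat.card_fun, Nat.card_fun,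
    Module.natCard_eq_pow_finrank (K := F) (V := V), Nat.card_eq_fintype_card (α := F)]
  simp only [Nat.card_eq_fintype_card, Fintype.card_fin]
  rw [← pow_add, ← pow_add, ← pow_mul, hn]

lemma finrank_ker_eq (w : V →ₗ[F] V) (a b g : ℕ) (hn : a + b + g = finrank F V)
    (x : Fin a → V) (hx : LinearIndependent F x) (hwx : ∀ i, w (x i) = 0)
    (y : Fin b → V) (e : Fin g → V)
    (h : LinearIndependent F (Sum.elim (fun i => w (y i)) (fun i => w (e i)))) :
    finrank F (LinearMap.ker w) = a := by
  have h1 := LinearMap.finrank_range_add_finrank_ker w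
  have h2 : a ≤ finrank F (LinearMap.ker w) := by
    have := finrank_span_eq_card hx
    rw [Fintype.card_fin] at this
    rw [← this]
    apply Submodule.finrank_mono
    rw [Submodule.span_le]
    rintro _ ⟨i, rfl⟩
    exact hwx i
  have h3 : b + g ≤ finrank F (LinearMap.range w) := by
    have := finrank_span_eq_card h
    rw [Fintype.card_sum, Fintype.card_fin, Fintype.card_fin] at this
    rw [← this]
    apply Submodule.finrank_mono
    rw [Submodule.span_le]
    rintro _ ⟨i | i, rfl⟩
    · exact ⟨_, rfl⟩
    · exact ⟨_, rfl⟩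
  omega

lemma lower_u (C : V →ₗ[F] V) (hC0 : ∀ v, C v = 0 → v = 0) (hC1 : ∀ v, C v = v → v = 0) (a b g : ℕ)
    (hn : a + b + g = finrank F V) (ha : 2 ≤ a) (hb : 2 ≤ b)
    (y : Fin b → V) (hy : LinearIndependent F y) (x : Fin a → V)
    (hx1 : LinearIndependent F ((Submodule.span F (Set.range y)).mkQ ∘ x))
    (hx2 : LinearIndependent F ((Submodule.span F (Set.range (C ∘ y))).mkQ ∘ x)) :
    (Fintype.card F : ℝ) ^ (finrank F V * g) * (1 / 4) ^ 2 ≤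
      (Nat.card {u : V →ₗ[F] V // IsX C a b u ∧ (∀ i, u (x i) = x i) ∧ ∀ i, u (y i) = C (y i)} : ℝ) := by
  have hx : LinearIndependent F x := LinearIndependent.of_comp _ hx1
  have hCy : LinearIndependent F (C ∘ y) := hy.map' C (LinearMap.ker_eq_bot'.2 hC0)
  have hD : LinearMap.ker (C - 1) = ⊥ := LinearMap.ker_eq_bot'.2 (fun v hv => by
    apply hC1
    rw [LinearMap.sub_apply, sub_eq_zero] at hv
    exact hv)
  have hD' : LinearMap.ker (1 - C) = ⊥ := LinearMap.ker_eq_bot'.2 (fun v hv => by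
    apply hC1
    rw [LinearMap.sub_apply, sub_eq_zero] at hv
    exact hv.symm)
  have hyx := li_sum y hy x hx1
  have hCyx := li_sum (C ∘ y) hCy x hx2
  obtain ⟨e, he⟩ := exists_compl _ hyx g (by simp; omega)
  have hcard : Fintype.card ((Fin b ⊕ Fin a) ⊕ Fin g) = finrank F V := by simp; omega
  let B : Basis ((Fin b ⊕ Fin a) ⊕ Fin g) F V :=
    Basis.mk he (he.span_eq_top_of_card_eq_finrank' hcard).ge
  have hB : ∀ j, B j = Sum.elim (Sum.elim y x) e j := fun j => Basis.mk_apply _ _ j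
  let e1 : ℕ → V := fun i => if h : i < g then e ⟨i, h⟩ else 0
  have he1 : ∀ i : Fin g, e1 i = e i := fun i => by simp [e1]
  have hcount := count_f (Submodule.span F (Set.range (Sum.elim (C ∘ y) x)))
    (Submodule.span F (Set.range ((C - 1 : V →ₗ[F] V) ∘ y)))
    (Submodule.span F (Set.range ((1 - C : V →ₗ[F] V) ∘ x))) e1 (fun i => C (e1 i)) a b g
    (by rw [finrank_span_eq_card hCyx]; simp; omega)
    ((finrank_range_le_card _).trans (by simp)) ((finrank_range_le_card _).trans (by simp))
    hn ha hb
  refine hcount.trans ?_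
  norm_cast
  let U : (Fin g → V) → (V →ₗ[F] V) := fun f => B.constr F (Sum.elim (Sum.elim (C ∘ y) x) f)
  have Uy : ∀ f i, U f (y i) = C (y i) := fun f i => by
    have := B.constr_basis F (Sum.elim (Sum.elim (C ∘ y) x) f) (Sum.inl (Sum.inl i))
    rw [hB] at this
    exact this
  have Ux : ∀ f i, U f (x i) = x i := fun f i => by
    have := B.constr_basis F (Sum.elim (Sum.elim (C ∘ y) x) f) (Sum.inl (Sum.inr i))
    rw [hB] at this
    exact this
  have Ue : ∀ f i, U f (e i) = f i := fun f i => by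
    have := B.constr_basis F (Sum.elim (Sum.elim (C ∘ y) x) f) (Sum.inr i)
    rw [hB] at this
    exact this
  refine Nat.card_le_card_of_injective (fun f => ⟨U f.1, ?_⟩) ?_
  · obtain ⟨f, hf1, hf2, hf3⟩ := f
    simp only [he1] at hf2 hf3
    refine ⟨⟨?_, ?_, ?_⟩, Ux f, Uy f⟩
    · rw [LinearMap.injective_iff_surjective, ← LinearMap.range_eq_top, eq_top_iff]
      rw [← (li_sum _ hCyx f hf1).span_eq_top_of_card_eq_finrank' hcard, Submodule.span_le]
      rintro _ ⟨(i | i) | i, rfl⟩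
      · exact ⟨y i, Uy f i⟩
      · exact ⟨x i, Ux f i⟩
      · exact ⟨e i, Ue f i⟩
    · refine finrank_ker_eq (U f - 1) a b g hn x hx (fun i => ?_) y e ?_
      · simp [Ux]
      · have := li_sum _ (hy.map' _ hD) _ hf2
        convert this using 2
        · funext i; simp [Uy]
        · funext i; simp [Ue]
    · refine finrank_ker_eq (U f - C) b a g (by omega) y hy (fun i => ?_) x e ?_
      · simp [Uy]
      · have := li_sum _ (hx.map' _ hD') _ hf3
        convert this using 2
        · funext i; simp [Ux]
        · funext i; simp [Ue]
  · rintro ⟨f, hf⟩ ⟨f', hf'⟩ h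
    simp only [Subtype.mk.injEq] at h
    apply Subtype.ext
    funext i
    simp only
    rw [← Ue f i, ← Ue f' i, h]

lemma lower (C : V →ₗ[F] V) (hC0 : ∀ v, C v = 0 → v = 0) (hC1 : ∀ v, C v = v → v = 0) (a b g : ℕ)
    (hn : a + b + g = finrank F V) (ha : 2 ≤ a) (hb : 2 ≤ b) :
    (Fintype.card F : ℝ) ^ (finrank F V * finrank F V) * (1 / 4) ^ 5 ≤
    ((Nat.card {u : V →ₗ[F] V // IsX C a b u} *
      (gam (Fintype.card F) a a * gam (Fintype.card F) b b) : ℕ) : ℝ) := by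
  rw [← card_TT]
  let Y : Type := {y : Fin b → V // LinearIndependent F y}
  let X : Y → Type := fun y => {x : Fin a → V //
    LinearIndependent F ((Submodule.span F (Set.range y.1)).mkQ ∘ x) ∧
    LinearIndependent F ((Submodule.span F (Set.range (C ∘ y.1))).mkQ ∘ x)}
  let Z : (y : Y) → X y → Type := fun y x =>
    {u : V →ₗ[F] V // IsX C a b u ∧ (∀ i, u (x.1 i) = x.1 i) ∧ ∀ i, u (y.1 i) = C (y.1 i)}
  have : Finite Y := Subtype.finite
  have : ∀ y, Finite (X y) := fun y => Subtype.finite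
  have : ∀ y x, Finite (Z y x) := fun y x => Subtype.finite
  have : Fintype Y := Fintype.ofFinite _
  have : ∀ y, Fintype (X y) := fun y => Fintype.ofFinite _
  have hinj : Nat.card (Σ y : Y, Σ x : X y, Z y x) ≤ Nat.card (TT C a b) := by
    refine Nat.card_le_card_of_injective (fun t =>
      ⟨⟨t.2.2.1, t.2.2.2.1⟩,
        ⟨fun i => ⟨t.2.1.1 i, by
          rw [LinearMap.mem_ker, LinearMap.sub_apply, sub_eq_zero]
          exact t.2.2.2.2.1 i⟩, LinearIndependent.of_comp (Submodule.subtype _)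
            (LinearIndependent.of_comp _ t.2.1.2.1)⟩,
        ⟨fun i => ⟨t.1.1 i, by
          rw [LinearMap.mem_ker, LinearMap.sub_apply, sub_eq_zero]
          exact t.2.2.2.2.2 i⟩, LinearIndependent.of_comp (Submodule.subtype _) t.1.2⟩⟩) ?_
    rintro ⟨⟨y, hy⟩, ⟨x, hx⟩, ⟨u, hu⟩⟩ ⟨⟨y', hy'⟩, ⟨x', hx'⟩, ⟨u', hu'⟩⟩ h
    simp only [Sigma.mk.injEq, Subtype.mk.injEq] at h
    obtain ⟨h1, h2⟩ := h
    subst h1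
    have h2 := eq_of_heq h2
    simp only [Prod.mk.injEq, Subtype.mk.injEq] at h2
    have hxx : x = x' := funext fun i => congrArg Subtype.val (congrFun h2.1 i)
    have hyy : y = y' := funext fun i => congrArg Subtype.val (congrFun h2.2 i)
    subst hxx; subst hyy; rfl
  refine le_trans ?_ (Nat.cast_le.2 hinj)
  rw [Nat.card_sigma]
  simp only [Nat.card_sigma]
  push_cast
  set q : ℝ := (Fintype.card F : ℝ) with hq
  set n := finrank F V with hnn
  have s1 : ∀ y : Y, q ^ (n * a) * (1 / 4) ^ 2 * (q ^ (n * g) * (1 / 4) ^ 2) ≤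
      ∑ x : X y, (Nat.card (Z y x) : ℝ) := by
    intro y
    calc q ^ (n * a) * (1 / 4) ^ 2 * (q ^ (n * g) * (1 / 4) ^ 2)
        ≤ (Nat.card (X y) : ℝ) * (q ^ (n * g) * (1 / 4) ^ 2) := by
          apply mul_le_mul_of_nonneg_right _ (by positivity)
          exact count_x _ _ a b ((finrank_range_le_card _).trans (by simp))
            ((finrank_range_le_card _).trans (by simp)) (by omega)
      _ = ∑ x : X y, (q ^ (n * g) * (1 / 4) ^ 2) := by simp [Nat.card_eq_fintype_card]
      _ ≤ _ := Finset.sum_le_sum fun x _ =>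
          lower_u C hC0 hC1 a b g hn ha hb y.1 y.2 x.1 x.2.1 x.2.2
  calc q ^ (n * n) * (1 / 4) ^ 5
      = (q ^ (n * b) * (1 / 4)) * (q ^ (n * a) * (1 / 4) ^ 2 * (q ^ (n * g) * (1 / 4) ^ 2)) := by
        have : n * n = n * b + n * a + n * g := by
          rw [← mul_add, ← mul_add]; congr 1; omega
        rw [this, pow_add, pow_add]; ring
    _ ≤ (Nat.card Y : ℝ) * (q ^ (n * a) * (1 / 4) ^ 2 * (q ^ (n * g) * (1 / 4) ^ 2)) := by
        apply mul_le_mul_of_nonneg_right _ (by positivity)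
        have hY : Nat.card Y = gam (Fintype.card F) n b := card_li V b (by omega)
        rw [hY]
        exact le_gam _ _ _ Fintype.one_lt_card (by omega)
    _ = ∑ y : Y, (q ^ (n * a) * (1 / 4) ^ 2 * (q ^ (n * g) * (1 / 4) ^ 2)) := by
        simp [Nat.card_eq_fintype_card]
    _ ≤ _ := Finset.sum_le_sum fun y _ => s1 y

end vs


section bridge

variable {F : Type} [Field F] [Fintype F]

lemma fixedDim_right {n : ℕ} (u v c : GL (Fin n) F) (h : u * v = c) :
    fixedDim v = finrank F (LinearMap.ker (Matrix.toLin' (u : Matrix (Fin n) (Fin n) F) -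
      Matrix.toLin' (c : Matrix (Fin n) (Fin n) F))) := by
  unfold fixedDim
  have hu : Function.Injective (Matrix.toLin' (u : Matrix (Fin n) (Fin n) F)) := by
    apply Function.LeftInverse.injective (g := Matrix.toLin' ((u⁻¹ : GL (Fin n) F) : Matrix (Fin n) (Fin n) F))
    intro x
    rw [← Matrix.toLin'_mul_apply, ← Units.val_mul]
    simp
  have hc : (c : Matrix (Fin n) (Fin n) F) = u * v := by rw [← h]; rfl
  have : Matrix.toLin' (u : Matrix (Fin n) (Fin n) F) - Matrix.toLin' (c : Matrix (Fin n) (Fin n) F)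
      = - (Matrix.toLin' (u : Matrix (Fin n) (Fin n) F) ∘ₗ
          Matrix.toLin' ((v : Matrix (Fin n) (Fin n) F) - 1)) := by
    rw [← Matrix.toLin'_mul, mul_sub, ← hc, map_sub, mul_one, neg_sub]
  rw [this]
  refine congrArg (fun K : Submodule F (Fin n → F) => finrank F K) (Submodule.ext fun x => ?_)
  simp only [LinearMap.mem_ker, LinearMap.neg_apply, neg_eq_zero, LinearMap.comp_apply]
  constructor
  · intro hx; rw [hx, map_zero]
  · intro hx; exact hu (by rw [hx, map_zero])

lemma fixedDim_left {n : ℕ} (u : GL (Fin n) F) :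
    fixedDim u = finrank F (LinearMap.ker (Matrix.toLin' (u : Matrix (Fin n) (Fin n) F) - 1)) := by
  unfold fixedDim
  rw [map_sub, Matrix.toLin'_one]; rfl

lemma toLin'_inj_GL {n : ℕ} (u : GL (Fin n) F) :
    Function.Injective (Matrix.toLin' (u : Matrix (Fin n) (Fin n) F)) := by
  apply Function.LeftInverse.injective (g := Matrix.toLin' ((u⁻¹ : GL (Fin n) F) : Matrix (Fin n) (Fin n) F))
  intro x
  rw [← Matrix.toLin'_mul_apply, ← Units.val_mul]
  simp

lemma exists_GL {n : ℕ} (u : (Fin n → F) →ₗ[F] (Fin n → F)) (hu : Function.Injective u) :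
    ∃ w : GL (Fin n) F, Matrix.toLin' (w : Matrix (Fin n) (Fin n) F) = u := by
  have h1 : IsUnit u := by
    rw [LinearMap.isUnit_iff_ker_eq_bot]
    exact LinearMap.ker_eq_bot.2 hu
  have h2 := h1.map (Matrix.toLinAlgEquiv' (R := F) (n := Fin n)).symm
  obtain ⟨w, hw⟩ := h2
  refine ⟨w, ?_⟩
  rw [hw]
  exact (Matrix.toLinAlgEquiv' (R := F) (n := Fin n)).apply_symm_apply u

lemma no_fixed {n : ℕ} (hn : 2 ≤ n) (c : GL (Fin n) F)
    (hc : Irreducible (Matrix.charpoly (c : Matrix (Fin n) (Fin n) F))) (v : Fin n → F)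
    (hv : Matrix.toLin' (c : Matrix (Fin n) (Fin n) F) v = v) : v = 0 := by
  by_contra h0
  have h1 : Module.End.HasEigenvalue (Matrix.toLin' (c : Matrix (Fin n) (Fin n) F)) 1 :=
    Module.End.hasEigenvalue_of_hasEigenvector (x := v)
      ⟨Module.End.mem_eigenspace_iff.2 (by rw [hv, one_smul]), h0⟩
  rw [Module.End.hasEigenvalue_iff_isRoot_charpoly, Matrix.charpoly_toLin'] at h1
  have h2 := Polynomial.degree_eq_one_of_irreducible_of_root hc h1
  rw [Matrix.charpoly_degree_eq_dim, Fintype.card_fin] at h2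
  have : n = 1 := by exact_mod_cast h2
  omega

lemma card_pairs_le {n g : ℕ} (c : GL (Fin n) F) :
    Nat.card {p : GL (Fin n) F × GL (Fin n) F //
        p.1 * p.2 = c ∧ fixedDim p.1 + fixedDim p.2 + g = n} ≤
      ∑ a ∈ Finset.range (n - g + 1), Nat.card {u : (Fin n → F) →ₗ[F] (Fin n → F) //
        IsX (Matrix.toLin' (c : Matrix (Fin n) (Fin n) F)) a (n - g - a) u} := by
  rw [Finset.sum_range, ← Nat.card_sigma]
  refine Nat.card_le_card_of_injective (fun p =>
    ⟨⟨fixedDim p.1.1, by have := p.2.2; omega⟩,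
      ⟨Matrix.toLin' (p.1.1 : Matrix (Fin n) (Fin n) F), toLin'_inj_GL _, (fixedDim_left _).symm, ?_⟩⟩) ?_
  · rw [← fixedDim_right _ _ _ p.2.1]
    have := p.2.2
    simp only
    omega
  · rintro ⟨⟨u, v⟩, h1, h2⟩ ⟨⟨u', v'⟩, h1', h2'⟩ h
    have huu : u = u' := by
      have := congrArg (fun t => (t.2.1 : (Fin n → F) →ₗ[F] (Fin n → F))) h
      simp only at this
      exact Units.ext (Matrix.toLin'.injective this)
    subst huu
    have hvv : v = v' := mul_left_cancel (h1.trans h1'.symm)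
    subst hvv
    rfl

lemma le_card_pairs {n g a b : ℕ} (hn : a + b + g = n) (c : GL (Fin n) F) :
    Nat.card {u : (Fin n → F) →ₗ[F] (Fin n → F) //
        IsX (Matrix.toLin' (c : Matrix (Fin n) (Fin n) F)) a b u} ≤
    Nat.card {p : GL (Fin n) F × GL (Fin n) F //
        p.1 * p.2 = c ∧ fixedDim p.1 + fixedDim p.2 + g = n} := by
  have hex : ∀ u : {u : (Fin n → F) →ₗ[F] (Fin n → F) //
        IsX (Matrix.toLin' (c : Matrix (Fin n) (Fin n) F)) a b u},
      ∃ w : GL (Fin n) F, Matrix.toLin' (w : Matrix (Fin n) (Fin n) F) = u.1 :=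
    fun u => exists_GL u.1 u.2.1
  choose w hw using hex
  refine Nat.card_le_card_of_injective (fun u => ⟨(w u, (w u)⁻¹ * c), ?_⟩) ?_
  · refine ⟨by simp, ?_⟩
    rw [fixedDim_left, fixedDim_right (w u) _ c (by simp), hw, u.2.2.1, u.2.2.2]
    exact hn
  · intro u u' h
    simp only [Subtype.mk.injEq, Prod.mk.injEq] at h
    apply Subtype.ext
    rw [← hw, ← hw, h.1]

lemma sum_bound (h s : ℕ) :
    ∑ a ∈ Finset.range (s + 1), (1 / 2 : ℝ) ^ ((a - h) + (h - a)) ≤ 4 := by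
  have h1 : ∑ a ∈ Finset.range (s + 1), (1 / 2 : ℝ) ^ ((a - h) + (h - a)) ≤
      ∑ a ∈ Finset.range (h + 1 + (s + 1)), (1 / 2 : ℝ) ^ ((a - h) + (h - a)) :=
    Finset.sum_le_sum_of_subset_of_nonneg
      (Finset.range_subset_range.2 (by omega)) (fun i _ _ => by positivity)
  rw [Finset.sum_range_add _ (h + 1) (s + 1)] at h1
  have h2 : ∑ a ∈ Finset.range (h + 1), (1 / 2 : ℝ) ^ ((a - h) + (h - a)) ≤ 2 := by
    rw [← Finset.sum_range_reflect]
    refine le_trans (le_of_eq ?_) (sum_geometric_two_le (h + 1))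
    refine Finset.sum_congr rfl fun i hi => ?_
    have := Finset.mem_range.1 hi
    congr 1
    omega
  have h3 : ∑ a ∈ Finset.range (s + 1), (1 / 2 : ℝ) ^ ((h + 1 + a - h) + (h - (h + 1 + a))) ≤ 2 := by
    refine le_trans (Finset.sum_le_sum fun i _ => ?_) (sum_geometric_two_le (s + 1))
    exact pow_le_pow_of_le_one (by norm_num) (by norm_num) (by omega)
  linarith

lemma exp_upper (n g a b h d : ℕ) (hn : a + b + g = n) (hh : h = (a + b) / 2)
    (hd : d = (a - h) + (h - a)) :
    2 * (n * n + g * g + d) ≤ (n + g) ^ 2 + 2 * (a * a + b * b) + 2 := by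
  have hs : (a + b = 2 * h ∨ a + b = 2 * h + 1) := by omega
  have hd' : (a = h + d ∨ a + d = h) := by omega
  zify at *
  rcases hs with hs | hs <;> rcases hd' with hd' | hd'
  · have hb : (b : ℤ) = h - d := by omega
    have ha : (a : ℤ) = h + d := by omega
    rw [← hn, ha, hb]; nlinarith [Int.le_self_sq (d : ℤ), sq_nonneg (d : ℤ)]
  · have hb : (b : ℤ) = h + d := by omega
    have ha : (a : ℤ) = h - d := by omega
    rw [← hn, ha, hb]; nlinarith [Int.le_self_sq (d : ℤ), sq_nonneg (d : ℤ)]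
  · have hb : (b : ℤ) = h + 1 - d := by omega
    have ha : (a : ℤ) = h + d := by omega
    rw [← hn, ha, hb]; nlinarith [sq_nonneg ((d : ℤ) - 1), Int.le_self_sq (d : ℤ)]
  · have hb : (b : ℤ) = h + 1 + d := by omega
    have ha : (a : ℤ) = h - d := by omega
    rw [← hn, ha, hb]; nlinarith [Int.le_self_sq (d : ℤ), sq_nonneg (d : ℤ)]

lemma exp_lower (n g a b : ℕ) (hn : a + b + g = n) (hab : b = a ∨ b = a + 1) :
    (n + g) ^ 2 + 2 * (a * a + b * b) ≤ 2 * (n * n + g * g) + 2 := by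
  subst hn
  rcases hab with rfl | rfl <;> nlinarith

lemma rpow_le_of (q : ℝ) (hq : 2 ≤ q) (m k l : ℕ) (h : 2 * k ≤ m + 2 * l) :
    q ^ k ≤ q ^ ((m : ℝ) / 2) * q ^ l := by
  have hq0 : 0 < q := by linarith
  rw [← Real.rpow_natCast q k, ← Real.rpow_natCast q l, ← Real.rpow_add hq0]
  apply Real.rpow_le_rpow_of_exponent_le (by linarith)
  have : (2 * k : ℝ) ≤ m + 2 * l := by exact_mod_cast h
  linarith

lemma rpow_ge_of (q : ℝ) (hq : 2 ≤ q) (m k l : ℕ) (h : m + 2 * l ≤ 2 * k) :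
    q ^ ((m : ℝ) / 2) * q ^ l ≤ q ^ k := by
  have hq0 : 0 < q := by linarith
  rw [← Real.rpow_natCast q k, ← Real.rpow_natCast q l, ← Real.rpow_add hq0]
  apply Real.rpow_le_rpow_of_exponent_le (by linarith)
  have : (m + 2 * l : ℝ) ≤ 2 * k := by exact_mod_cast h
  linarith

end bridge

end GenusFact

/-- Theorem 5.1: for fixed `q` and genus `g`, the number of genus-`g` factorizations of a
regular elliptic element of `GL_n(F_q)` into two factors grows like
`Θ(q^{(n+g)²/2} / |GL_g(F_q)|)` as `n → ∞`, with implicit constants depending only on `q`. -/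
theorem genus_g_factorization_asymptotics
    (F : Type) [Field F] [Fintype F] :
    ∃ C₁ C₂ : ℝ, 0 < C₁ ∧ 0 < C₂ ∧
      ∀ g : ℕ, ∃ N : ℕ, ∀ n : ℕ, N ≤ n →
        ∀ c : GL (Fin n) F,
          Irreducible (Matrix.charpoly (c : Matrix (Fin n) (Fin n) F)) →
            C₁ * (Fintype.card F : ℝ) ^ ((((n + g) ^ 2 : ℕ) : ℝ) / 2) /
                (Nat.card (GL (Fin g) F) : ℝ)
              ≤ (Nat.card {p : GL (Fin n) F × GL (Fin n) F //
                  p.1 * p.2 = c ∧ fixedDim p.1 + fixedDim p.2 + g = n} : ℝ) ∧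
            (Nat.card {p : GL (Fin n) F × GL (Fin n) F //
                p.1 * p.2 = c ∧ fixedDim p.1 + fixedDim p.2 + g = n} : ℝ)
              ≤ C₂ * (Fintype.card F : ℝ) ^ ((((n + g) ^ 2 : ℕ) : ℝ) / 2) /
                  (Nat.card (GL (Fin g) F) : ℝ) := by
  classical
  set q : ℝ := (Fintype.card F : ℝ) with hq
  have hqN : 2 ≤ Fintype.card F := Fintype.one_lt_card
  have hq2 : (2 : ℝ) ≤ q := by rw [hq]; exact_mod_cast hqN
  have hq0 : 0 < q := by linarith
  refine ⟨(1 / 4) ^ 6 / q, 64 * q, by positivity, by positivity, fun g => ⟨g + 4, fun n hn c hc => ?_⟩⟩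
  have hC0 : ∀ v, Matrix.toLin' (c : Matrix (Fin n) (Fin n) F) v = 0 → v = 0 := fun v hv =>
    GenusFact.toLin'_inj_GL c (by rw [hv, map_zero])
  have hC1 := GenusFact.no_fixed (by omega) c hc
  have hfr : Module.finrank F (Fin n → F) = n := by simp
  have hGL : Nat.card (GL (Fin g) F) = GenusFact.gam (Fintype.card F) g g := Matrix.card_GL_field g
  have hGLu : (Nat.card (GL (Fin g) F) : ℝ) ≤ q ^ (g * g) := by
    rw [hGL]; exact GenusFact.gam_le _ _ _
  have hGLl : q ^ (g * g) * (1 / 4) ≤ (Nat.card (GL (Fin g) F) : ℝ) := by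
    rw [hGL]; exact GenusFact.le_gam _ _ _ hqN le_rfl
  have hGL0 : (0 : ℝ) < Nat.card (GL (Fin g) F) := lt_of_lt_of_le (by positivity) hGLl
  set G : ℝ := (Nat.card (GL (Fin g) F) : ℝ) with hG
  set E : ℝ := q ^ ((((n + g) ^ 2 : ℕ) : ℝ) / 2) with hE
  have hE0 : 0 < E := Real.rpow_pos_of_pos hq0 _
  constructor
  · obtain ⟨a, b, hab, hn', ha, hb⟩ : ∃ a b : ℕ, (b = a ∨ b = a + 1) ∧ a + b + g = n ∧ 2 ≤ a ∧ 2 ≤ b :=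
      ⟨(n - g) / 2, n - g - (n - g) / 2, by omega, by omega, by omega, by omega⟩
    have hlow := GenusFact.lower (Matrix.toLin' (c : Matrix (Fin n) (Fin n) F)) hC0 hC1 a b g
      (by rw [hfr]; exact hn') ha hb
    have hle := GenusFact.le_card_pairs hn' c
    refine le_trans ?_ (Nat.cast_le.2 hle)
    rw [hfr] at hlow
    push_cast at hlow
    set x : ℝ := (Nat.card {u : (Fin n → F) →ₗ[F] (Fin n → F) //
        GenusFact.IsX (Matrix.toLin' (c : Matrix (Fin n) (Fin n) F)) a b u} : ℝ) with hx
    have hx0 : 0 ≤ x := by rw [hx]; positivity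
    have g1 := GenusFact.gam_le (Fintype.card F) a a
    have g2 := GenusFact.gam_le (Fintype.card F) b b
    have h1 : q ^ (n * n) * (1 / 4) ^ 5 ≤ x * q ^ (a * a + b * b) := by
      refine hlow.trans ?_
      rw [pow_add]
      gcongr
    have h2 : E * q ^ (a * a + b * b) ≤ q ^ (n * n + g * g + 1) :=
      GenusFact.rpow_ge_of q hq2 _ _ _ (by have := GenusFact.exp_lower n g a b hn' hab; omega)
    have hpos : 0 < q ^ (a * a + b * b) := by positivity
    rw [div_le_iff₀ hGL0]
    have h3 : (1 / 4) ^ 6 / q * E * q ^ (a * a + b * b) ≤ x * G * q ^ (a * a + b * b) := by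
      calc (1 / 4) ^ 6 / q * E * q ^ (a * a + b * b)
          = (1 / 4) ^ 6 / q * (E * q ^ (a * a + b * b)) := by ring
        _ ≤ (1 / 4) ^ 6 / q * q ^ (n * n + g * g + 1) := by gcongr
        _ = (q ^ (n * n) * (1 / 4) ^ 5) * (q ^ (g * g) * (1 / 4)) := by
            rw [pow_succ q, pow_add q]; field_simp
        _ ≤ (x * q ^ (a * a + b * b)) * G := by gcongr
        _ = _ := by ring
    exact le_of_mul_le_mul_right h3 hpos
  · refine (Nat.cast_le.2 (GenusFact.card_pairs_le c)).trans ?_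
    push_cast
    set h := (n - g) / 2 with hh
    have hterm : ∀ a ∈ Finset.range (n - g + 1),
        (Nat.card {u : (Fin n → F) →ₗ[F] (Fin n → F) //
        GenusFact.IsX (Matrix.toLin' (c : Matrix (Fin n) (Fin n) F)) a (n - g - a) u} : ℝ) ≤
        16 * q * E / G * (1 / 2) ^ ((a - h) + (h - a)) := by
      intro a ha
      have ha' := Finset.mem_range.1 ha
      obtain ⟨b, hb⟩ : ∃ b, b = n - g - a := ⟨_, rfl⟩
      rw [← hb]
      have hn' : a + b + g = n := by omega
      have hup := GenusFact.upper (Matrix.toLin' (c : Matrix (Fin n) (Fin n) F)) hC1 a b g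
        (by rw [hfr]; exact hn')
      rw [hfr] at hup
      set x : ℝ := (Nat.card {u : (Fin n → F) →ₗ[F] (Fin n → F) //
        GenusFact.IsX (Matrix.toLin' (c : Matrix (Fin n) (Fin n) F)) a b u} : ℝ) with hx
      have hx0 : 0 ≤ x := by rw [hx]; positivity
      have hup' : x * ((GenusFact.gam (Fintype.card F) a a : ℝ) *
          (GenusFact.gam (Fintype.card F) b b : ℝ)) ≤ q ^ (n * n) := by
        rw [hx, hq]; exact_mod_cast hup
      have g1 := GenusFact.le_gam (Fintype.card F) a a hqN le_rfl
      have g2 := GenusFact.le_gam (Fintype.card F) b b hqN le_rfl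
      obtain ⟨d, hd⟩ : ∃ d, d = (a - h) + (h - a) := ⟨_, rfl⟩
      rw [← hd]
      have h1 : x * q ^ (a * a + b * b) ≤ 16 * q ^ (n * n) := by
        have : x * ((q ^ (a * a) * (1 / 4)) * (q ^ (b * b) * (1 / 4))) ≤ q ^ (n * n) := by
          refine le_trans ?_ hup'
          gcongr
        rw [pow_add]
        linarith
      have h2 : q ^ (n * n + g * g + d) ≤ E * q ^ (a * a + b * b + 1) :=
        GenusFact.rpow_le_of q hq2 _ _ _ (by
          have := GenusFact.exp_upper n g a b h d hn' (by omega) hd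
          omega)
      have hpos : 0 < q ^ (a * a + b * b) := by positivity
      have hqd : 1 ≤ q ^ d * (1 / 2) ^ d := by
        rw [← mul_pow]; exact one_le_pow₀ (by linarith)
      rw [div_mul_eq_mul_div, le_div_iff₀ hGL0]
      have h3 : x * G * q ^ (a * a + b * b) ≤ 16 * q * E * (1 / 2) ^ d * q ^ (a * a + b * b) := by
        calc x * G * q ^ (a * a + b * b) = (x * q ^ (a * a + b * b)) * G := by ring
          _ ≤ (16 * q ^ (n * n)) * q ^ (g * g) := by gcongr
          _ ≤ (16 * q ^ (n * n)) * q ^ (g * g) * (q ^ d * (1 / 2) ^ d) :=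
              le_mul_of_one_le_right (by positivity) hqd
          _ = 16 * (1 / 2) ^ d * q ^ (n * n + g * g + d) := by rw [pow_add, pow_add]; ring
          _ ≤ 16 * (1 / 2) ^ d * (E * q ^ (a * a + b * b + 1)) := by gcongr
          _ = _ := by rw [pow_succ]; ring
      exact le_of_mul_le_mul_right h3 hpos
    refine (Finset.sum_le_sum hterm).trans ?_
    rw [← Finset.mul_sum]
    have := GenusFact.sum_bound h (n - g)
    calc 16 * q * E / G * ∑ a ∈ Finset.range (n - g + 1), (1 / 2 : ℝ) ^ ((a - h) + (h - a))
        ≤ 16 * q * E / G * 4 := by gcongr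
      _ = 64 * q * E / G := by ring
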